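/- arXiv:1612.05594 — 2 statements merged into one kernel-verified Lean document; each statement's English description precedes it below -/
import Mathlib

section
/- Let f : ℝⁿ → ℝⁿ be continuously differentiable, let M be a symmetric positive definite real n×n matrix, β > 0, ℓ > 0. Let x̄ : [0,∞) → ℝⁿ be a differentiable nominal trajectory with x̄′(t) = f(x̄(t)), and suppose that for every t ≥ 0 and every v ∈ ℝⁿ with ‖v − x̄(t)‖_M ≤ ℓ one has (Df(v))ᵀ M + M (Df(v)) ≼ −2βM. If x : [0,∞) → ℝⁿ is differentiable with x′(t) = f(x(t)) and ‖x(0) − x̄(0)‖_M ≤ ℓ, then for all t ≥ 0 the trajectory remains in the ball, i.e. ‖x(t) − x̄(t)‖_M ≤ ℓ, and moreover converges exponentially: ‖x(t) − x̄(t)‖_M ≤ e^{−βt} ‖x(0) − x̄(0)‖_M. -/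
open Matrix

/-- The M-norm of a vector: `‖v‖_M = √(vᵀ M v)`. -/
noncomputable def mnorm {n : ℕ} (M : Matrix (Fin n) (Fin n) ℝ) (v : Fin n → ℝ) : ℝ :=
  Real.sqrt (v ⬝ᵥ M.mulVec v)

/-- The Jacobian of `f` at `z`, as a matrix. -/
noncomputable def jac {n : ℕ} (f : (Fin n → ℝ) → (Fin n → ℝ)) (z : Fin n → ℝ) :
    Matrix (Fin n) (Fin n) ℝ :=
  LinearMap.toMatrix' (fderiv ℝ f z : (Fin n → ℝ) →ₗ[ℝ] (Fin n → ℝ))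

/-- Loewner order: `A ≼ B` iff `B - A` is positive semidefinite. -/
def loewnerLE {n : ℕ} (A B : Matrix (Fin n) (Fin n) ℝ) : Prop := (B - A).PosSemidef

lemma hasDerivAt_dot {n : ℕ} {a b : ℝ → Fin n → ℝ} {a' b' : Fin n → ℝ} {t : ℝ}
    (ha : HasDerivAt a a' t) (hb : HasDerivAt b b' t) :
    HasDerivAt (fun s => a s ⬝ᵥ b s) (a' ⬝ᵥ b t + a t ⬝ᵥ b') t := by
  simp only [dotProduct, ← Finset.sum_add_distrib]
  exact HasDerivAt.fun_sum fun i _ => (hasDerivAt_pi.1 ha i).mul (hasDerivAt_pi.1 hb i)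

lemma hasDerivAt_mulVec' {n : ℕ} (M : Matrix (Fin n) (Fin n) ℝ) {a : ℝ → Fin n → ℝ}
    {a' : Fin n → ℝ} {t : ℝ} (ha : HasDerivAt a a' t) :
    HasDerivAt (fun s => M.mulVec (a s)) (M.mulVec a') t :=
  (LinearMap.toContinuousLinearMap (Matrix.toLin' M)).hasFDerivAt.comp_hasDerivAt t ha

lemma symm_dot {n : ℕ} {M : Matrix (Fin n) (Fin n) ℝ} (hM : M.IsSymm) (a b : Fin n → ℝ) :
    a ⬝ᵥ M.mulVec b = b ⬝ᵥ M.mulVec a := by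
  rw [Matrix.dotProduct_mulVec, ← Matrix.mulVec_transpose, hM.eq, dotProduct_comm]

lemma jac_ineq {n : ℕ} {f : (Fin n → ℝ) → (Fin n → ℝ)} {M : Matrix (Fin n) (Fin n) ℝ}
    (hM : M.IsSymm) {β : ℝ} {v : Fin n → ℝ}
    (h : loewnerLE ((jac f v)ᵀ * M + M * jac f v) ((-(2 * β)) • M)) (e : Fin n → ℝ) :
    e ⬝ᵥ M.mulVec (fderiv ℝ f v e) ≤ -β * (e ⬝ᵥ M.mulVec e) := by
  have h1 := h.dotProduct_mulVec_nonneg e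
  have hj : (jac f v).mulVec e = fderiv ℝ f v e := by
    simp [jac, LinearMap.toMatrix'_mulVec]
  have h2 : e ⬝ᵥ ((jac f v)ᵀ * M).mulVec e = e ⬝ᵥ M.mulVec (fderiv ℝ f v e) := by
    rw [← Matrix.mulVec_mulVec, Matrix.dotProduct_mulVec, Matrix.vecMul_transpose, hj,
      symm_dot hM]
  have h3 : e ⬝ᵥ (M * jac f v).mulVec e = e ⬝ᵥ M.mulVec (fderiv ℝ f v e) := by
    rw [← Matrix.mulVec_mulVec, hj]
  simp only [star_trivial, Matrix.sub_mulVec, Matrix.add_mulVec, dotProduct_sub, dotProduct_add,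
    h2, h3, Matrix.smul_mulVec, dotProduct_smul, smul_eq_mul] at h1
  linarith

lemma seg_ineq {n : ℕ} {f : (Fin n → ℝ) → (Fin n → ℝ)} (hf : ContDiff ℝ 1 f)
    {M : Matrix (Fin n) (Fin n) ℝ} (hM : M.IsSymm) {β ℓ : ℝ} (hℓ : 0 < ℓ) {w : Fin n → ℝ}
    (hc : ∀ v : Fin n → ℝ, mnorm M (v - w) ≤ ℓ →
      loewnerLE ((jac f v)ᵀ * M + M * jac f v) ((-(2 * β)) • M))
    (e : Fin n → ℝ) (he0 : 0 ≤ e ⬝ᵥ M.mulVec e) (he : e ⬝ᵥ M.mulVec e ≤ ℓ ^ 2) :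
    e ⬝ᵥ M.mulVec (f (w + e) - f w) ≤ -β * (e ⬝ᵥ M.mulVec e) := by
  have hd : ∀ s : ℝ, HasDerivAt (fun s : ℝ => e ⬝ᵥ M.mulVec (f (w + s • e)))
      (e ⬝ᵥ M.mulVec (fderiv ℝ f (w + s • e) e)) s := by
    intro s
    have h1 : HasDerivAt (fun s : ℝ => w + s • e) e s := by
      simpa using ((hasDerivAt_id s).smul_const e).const_add w
    have h2 : HasDerivAt (fun s : ℝ => f (w + s • e)) (fderiv ℝ f (w + s • e) e) s :=
      ((hf.differentiable one_ne_zero) (w + s • e)).hasFDerivAt.comp_hasDerivAt s h1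
    simpa using hasDerivAt_dot (hasDerivAt_const s e) (hasDerivAt_mulVec' M h2)
  obtain ⟨c, hc1, hc2⟩ := exists_hasDerivAt_eq_slope _ _ (zero_lt_one (α := ℝ))
    (fun s _ => (hd s).continuousAt.continuousWithinAt) (fun s _ => hd s)
  have hb : mnorm M (w + c • e - w) ≤ ℓ := by
    rw [add_sub_cancel_left, mnorm, Real.sqrt_le_left hℓ.le]
    simp only [Matrix.mulVec_smul, dotProduct_smul, smul_dotProduct, smul_eq_mul]
    nlinarith [mul_le_mul hc1.2.le hc1.2.le hc1.1.le zero_le_one, hc1.1]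
  have := jac_ineq hM (hc _ hb) e
  rw [hc2] at this
  simpa [Matrix.mulVec_sub, dotProduct_sub] using this

theorem stmt2 {n : ℕ} (f : (Fin n → ℝ) → (Fin n → ℝ)) (hf : ContDiff ℝ 1 f)
    (M : Matrix (Fin n) (Fin n) ℝ) (hMsymm : M.IsSymm) (hMpd : M.PosDef)
    (β ℓ : ℝ) (hβ : 0 < β) (hℓ : 0 < ℓ)
    (xbar : ℝ → Fin n → ℝ)
    (hxbar : ∀ t : ℝ, 0 ≤ t → HasDerivAt xbar (f (xbar t)) t)
    (hcontract : ∀ t : ℝ, 0 ≤ t → ∀ v : Fin n → ℝ, mnorm M (v - xbar t) ≤ ℓ →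
      loewnerLE ((jac f v)ᵀ * M + M * jac f v) ((-(2 * β)) • M))
    (x : ℝ → Fin n → ℝ)
    (hx : ∀ t : ℝ, 0 ≤ t → HasDerivAt x (f (x t)) t)
    (hx0 : mnorm M (x 0 - xbar 0) ≤ ℓ) :
    ∀ t : ℝ, 0 ≤ t →
      mnorm M (x t - xbar t) ≤ ℓ ∧
      mnorm M (x t - xbar t) ≤ Real.exp (-β * t) * mnorm M (x 0 - xbar 0) := by
  set V : ℝ → ℝ := fun t => (x t - xbar t) ⬝ᵥ M.mulVec (x t - xbar t) with hV
  have hV0 : ∀ t, 0 ≤ V t := fun t => by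
    have := hMpd.posSemidef.dotProduct_mulVec_nonneg (x t - xbar t)
    rwa [star_trivial] at this
  have hd : ∀ t, 0 ≤ t →
      HasDerivAt V (2 * ((x t - xbar t) ⬝ᵥ M.mulVec (f (x t) - f (xbar t)))) t := by
    intro t ht
    have h := (hx t ht).sub (hxbar t ht)
    have h2 := hasDerivAt_dot h (hasDerivAt_mulVec' M h)
    refine HasDerivAt.congr_deriv h2 ?_
    rw [symm_dot hMsymm (f (x t) - f (xbar t))]
    simp only [Pi.sub_apply]
    ring
  have hkey : ∀ t, 0 ≤ t → V t ≤ ℓ ^ 2 →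
      2 * ((x t - xbar t) ⬝ᵥ M.mulVec (f (x t) - f (xbar t))) ≤ -(2 * β) * V t := by
    intro t ht hl
    have := seg_ineq hf hMsymm hℓ (hcontract t ht) (x t - xbar t) (hV0 t) hl
    rw [add_sub_cancel] at this
    simp only [hV]
    linarith
  have hball : ∀ t, 0 ≤ t → V t ≤ ℓ ^ 2 := by
    intro t ht
    refine image_le_of_deriv_right_lt_deriv_boundary (a := 0) (b := t) (f := V)
      (B := fun _ => ℓ ^ 2) (B' := fun _ => 0)
      (fun s hs => (hd s hs.1).continuousAt.continuousWithinAt)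
      (fun s hs => (hd s hs.1).hasDerivWithinAt) ?_ (fun s => hasDerivAt_const s _) ?_
      (Set.right_mem_Icc.2 ht)
    · exact (Real.sqrt_le_left hℓ.le).1 hx0
    · intro s hs hs2
      have := hkey s hs.1 hs2.le
      rw [hs2] at this
      have : 0 < β * ℓ ^ 2 := by positivity
      linarith
  have hW : AntitoneOn (fun t => Real.exp (2 * β * t) * V t) (Set.Ici 0) := by
    have hWd : ∀ t, 0 ≤ t → HasDerivAt (fun t => Real.exp (2 * β * t) * V t)
        (Real.exp (2 * β * t) * (2 * β) * V t + Real.exp (2 * β * t) *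
          (2 * ((x t - xbar t) ⬝ᵥ M.mulVec (f (x t) - f (xbar t))))) t := by
      intro t ht
      have h1 : HasDerivAt (fun t : ℝ => 2 * β * t) (2 * β) t := by
        simpa using (hasDerivAt_id t).const_mul (2 * β)
      exact h1.exp.mul (hd t ht)
    refine antitoneOn_of_hasDerivWithinAt_nonpos (convex_Ici 0)
      (fun t ht => (hWd t ht).continuousAt.continuousWithinAt)
      (fun t ht => (hWd t (interior_subset ht)).hasDerivWithinAt) ?_
    intro t ht
    have ht' : 0 ≤ t := interior_subset ht
    have := mul_le_mul_of_nonneg_left (hkey t ht' (hball t ht')) (Real.exp_pos (2 * β * t)).le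
    linarith
  intro t ht
  refine ⟨(Real.sqrt_le_left hℓ.le).2 (hball t ht), ?_⟩
  have h1 : Real.exp (2 * β * t) * V t ≤ V 0 := by
    simpa using hW (Set.mem_Ici.2 le_rfl) (Set.mem_Ici.2 ht) ht
  have h2 : V t ≤ Real.exp (-β * t) ^ 2 * V 0 := by
    have h3 : Real.exp (-β * t) ^ 2 * Real.exp (2 * β * t) = 1 := by
      rw [← Real.exp_nat_mul, ← Real.exp_add]
      simp only [Real.exp_eq_one_iff]
      push_cast
      ring
    have := mul_le_mul_of_nonneg_left h1 (sq_nonneg (Real.exp (-β * t)))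
    rwa [← mul_assoc, h3, one_mul] at this
  have h4 : Real.exp (-β * t) * mnorm M (x 0 - xbar 0)
      = Real.sqrt (Real.exp (-β * t) ^ 2 * V 0) := by
    rw [Real.sqrt_mul (sq_nonneg _), Real.sqrt_sq (Real.exp_pos _).le]
    rfl
  rw [h4]
  exact Real.sqrt_le_sqrt h2
end

section
/- Let f : ℝⁿ → ℝⁿ be continuously differentiable, let M be a symmetric positive definite real n×n matrix with M ≼ I, let β > 0, ℓ > 0, ρ_max ≥ 0, and let ω : ℝ → ℝⁿ be a disturbance with ‖ω(t)‖ ≤ ρ_max for all t ≥ 0. Let x, x̄ : [0,∞) → ℝⁿ be differentiable with x′(t) = f(x(t)) + ω(t), x̄′(t) = f(x̄(t)), and x(0) = x̄(0). Assume that for all t ≥ 0 the deviation satisfies ‖x(t) − x̄(t)‖_M ≤ ℓ and that the segment joining x(t) and x̄(t) lies in the contraction region, i.e. (Df(v))ᵀ M + M (Df(v)) ≼ −2βM for every v on that segment. Then for all t ≥ 0, ‖x(t) − x̄(t)‖²_M ≤ (2 ℓ ρ_max / β)(1 − e^{−βt}). -/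
open Matrix

theorem aux_dot {n : ℕ} {u w : ℝ → Fin n → ℝ} {u' w' : Fin n → ℝ} {t : ℝ}
    (hu : HasDerivAt u u' t) (hw : HasDerivAt w w' t) :
    HasDerivAt (fun s => u s ⬝ᵥ w s) (u' ⬝ᵥ w t + u t ⬝ᵥ w') t := by
  have h : HasDerivAt (fun s => ∑ i, u s i * w s i) (∑ i, (u' i * w t i + u t i * w' i)) t :=
    HasDerivAt.fun_sum fun i _ => (hasDerivAt_pi.1 hu i).mul (hasDerivAt_pi.1 hw i)
  simpa [dotProduct, Finset.sum_add_distrib] using h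

theorem aux_mulVec {n : ℕ} (M : Matrix (Fin n) (Fin n) ℝ) {u : ℝ → Fin n → ℝ} {u' : Fin n → ℝ}
    {t : ℝ} (hu : HasDerivAt u u' t) :
    HasDerivAt (fun s => M.mulVec (u s)) (M.mulVec u') t := by
  have h := (LinearMap.toContinuousLinearMap (Matrix.toLin' M)).hasFDerivAt.comp_hasDerivAt t hu
  simpa [Function.comp_def] using h

theorem aux_symm {n : ℕ} {M : Matrix (Fin n) (Fin n) ℝ} (h : M.IsSymm) (u w : Fin n → ℝ) :
    u ⬝ᵥ M.mulVec w = w ⬝ᵥ M.mulVec u := by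
  rw [dotProduct_comm u, Matrix.dotProduct_mulVec, ← Matrix.mulVec_transpose, h.eq,
    dotProduct_comm]

theorem aux_psd {n : ℕ} {M : Matrix (Fin n) (Fin n) ℝ} (h : M.PosSemidef) (u : Fin n → ℝ) :
    0 ≤ u ⬝ᵥ M.mulVec u := by
  simpa using h.dotProduct_mulVec_nonneg u

theorem aux_cs {n : ℕ} {M : Matrix (Fin n) (Fin n) ℝ} (hs : M.IsSymm) (h : M.PosSemidef)
    (u w : Fin n → ℝ) :
    (u ⬝ᵥ M.mulVec w) ^ 2 ≤ (u ⬝ᵥ M.mulVec u) * (w ⬝ᵥ M.mulVec w) := by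
  have key : ∀ s : ℝ, 0 ≤ (w ⬝ᵥ M.mulVec w) * (s * s) + (2 * (u ⬝ᵥ M.mulVec w)) * s
      + (u ⬝ᵥ M.mulVec u) := by
    intro s
    have h1 := aux_psd h (u + s • w)
    simp only [Matrix.mulVec_add, Matrix.mulVec_smul, dotProduct_add, add_dotProduct,
      smul_dotProduct, dotProduct_smul, smul_eq_mul] at h1
    rw [aux_symm hs w u] at h1
    linarith
  have := discrim_le_zero key
  unfold discrim at this
  nlinarith

theorem aux_jac {n : ℕ} (f : (Fin n → ℝ) → (Fin n → ℝ))
    {M : Matrix (Fin n) (Fin n) ℝ} (hs : M.IsSymm) (β : ℝ) (v d : Fin n → ℝ)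
    (h : loewnerLE ((jac f v)ᵀ * M + M * jac f v) ((-(2 * β)) • M)) :
    d ⬝ᵥ M.mulVec (fderiv ℝ f v d) ≤ -β * (d ⬝ᵥ M.mulVec d) := by
  have h1 := aux_psd h d
  have hj : (jac f v).mulVec d = fderiv ℝ f v d := by
    unfold jac
    rw [LinearMap.toMatrix'_mulVec]
    rfl
  have e : d ⬝ᵥ (jac f v)ᵀ.mulVec (M.mulVec d) = d ⬝ᵥ M.mulVec (fderiv ℝ f v d) := by
    rw [Matrix.dotProduct_mulVec, Matrix.vecMul_transpose, hj, aux_symm hs]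
  simp only [Matrix.sub_mulVec, Matrix.add_mulVec, Matrix.smul_mulVec, dotProduct_sub,
    dotProduct_add, dotProduct_smul, smul_eq_mul, ← Matrix.mulVec_mulVec] at h1
  rw [e, hj] at h1
  linarith

theorem aux_mvt {n : ℕ} (f : (Fin n → ℝ) → (Fin n → ℝ)) (hf : ContDiff ℝ 1 f)
    {M : Matrix (Fin n) (Fin n) ℝ} (hs : M.IsSymm) (β : ℝ) (a b : Fin n → ℝ)
    (h : ∀ v ∈ segment ℝ a b, loewnerLE ((jac f v)ᵀ * M + M * jac f v) ((-(2 * β)) • M)) :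
    (a - b) ⬝ᵥ M.mulVec (f a - f b) ≤ -β * ((a - b) ⬝ᵥ M.mulVec (a - b)) := by
  have hg : ∀ s : ℝ, HasDerivAt (fun s : ℝ => (a - b) ⬝ᵥ M.mulVec (f (b + s • (a - b))))
      ((a - b) ⬝ᵥ M.mulVec (fderiv ℝ f (b + s • (a - b)) (a - b))) s := by
    intro s
    have h1 : HasDerivAt (fun s : ℝ => b + s • (a - b)) (a - b) s := by
      simpa using ((hasDerivAt_id s).smul_const (a - b)).const_add b
    have h2 := ((hf.differentiable (by norm_num)) (b + s • (a - b))).hasFDerivAt.comp_hasDerivAt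
      s h1
    have h3 := aux_dot (hasDerivAt_const s (a - b)) (aux_mulVec M h2)
    simpa [Function.comp_def] using h3
  obtain ⟨c, hc, hce⟩ := exists_hasDerivAt_eq_slope _ _ (zero_lt_one (α := ℝ))
    (fun s _ => (hg s).continuousAt.continuousWithinAt) (fun s _ => hg s)
  have hm : b + c • (a - b) ∈ segment ℝ a b := by
    refine ⟨c, 1 - c, hc.1.le, by linarith [hc.2], by ring, ?_⟩
    module
  have h4 := aux_jac f hs β _ (a - b) (h _ hm)
  rw [hce] at h4
  simp only [one_smul, zero_smul, add_zero, sub_zero, div_one, add_sub_cancel] at h4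
  rw [Matrix.mulVec_sub, dotProduct_sub]
  linarith

theorem stmt8 {n : ℕ} (f : (Fin n → ℝ) → (Fin n → ℝ)) (hf : ContDiff ℝ 1 f)
    (M : Matrix (Fin n) (Fin n) ℝ) (hMsymm : M.IsSymm) (hMpd : M.PosDef)
    (hMle : loewnerLE M (1 : Matrix (Fin n) (Fin n) ℝ))
    (β ℓ ρmax : ℝ) (hβ : 0 < β) (hℓ : 0 < ℓ) (hρ : 0 ≤ ρmax)
    (ω : ℝ → Fin n → ℝ)
    (hω : ∀ t : ℝ, 0 ≤ t → Real.sqrt (ω t ⬝ᵥ ω t) ≤ ρmax)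
    (x xbar : ℝ → Fin n → ℝ)
    (hx : ∀ t : ℝ, 0 ≤ t → HasDerivAt x (f (x t) + ω t) t)
    (hxbar : ∀ t : ℝ, 0 ≤ t → HasDerivAt xbar (f (xbar t)) t)
    (hinit : x 0 = xbar 0)
    (htube : ∀ t : ℝ, 0 ≤ t → mnorm M (x t - xbar t) ≤ ℓ)
    (hcontract : ∀ t : ℝ, 0 ≤ t → ∀ v ∈ segment ℝ (x t) (xbar t),
      loewnerLE ((jac f v)ᵀ * M + M * jac f v) ((-(2 * β)) • M)) :
    ∀ t : ℝ, 0 ≤ t →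
      (mnorm M (x t - xbar t)) ^ 2 ≤ (2 * ℓ * ρmax / β) * (1 - Real.exp (-β * t)) := by
  have hps := hMpd.posSemidef
  set V : ℝ → ℝ := fun t => (x t - xbar t) ⬝ᵥ M.mulVec (x t - xbar t) with hV
  have hV0 : ∀ t, 0 ≤ V t := fun t => aux_psd hps _
  have hVm : ∀ t, mnorm M (x t - xbar t) ^ 2 = V t := fun t => Real.sq_sqrt (hV0 t)
  set D : ℝ → ℝ := fun t => 2 * ((x t - xbar t) ⬝ᵥ M.mulVec (f (x t) - f (xbar t)))
    + 2 * ((x t - xbar t) ⬝ᵥ M.mulVec (ω t)) with hD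
  have hderiv : ∀ t, 0 ≤ t → HasDerivAt V (D t) t := by
    intro t ht
    have h1 := (hx t ht).sub (hxbar t ht)
    have h2 := aux_dot h1 (aux_mulVec M h1)
    refine HasDerivAt.congr_deriv (f := V) h2 ?_
    simp only [Pi.sub_apply]
    rw [aux_symm hMsymm (f (x t) + ω t - f (xbar t)),
      show f (x t) + ω t - f (xbar t) = (f (x t) - f (xbar t)) + ω t by abel,
      Matrix.mulVec_add, dotProduct_add]
    simp only [hD]
    ring
  have hbound : ∀ t, 0 ≤ t → D t ≤ -β * V t + 2 * ℓ * ρmax := by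
    intro t ht
    have h1 := aux_mvt f hf hMsymm β (x t) (xbar t) (hcontract t ht)
    have h2 := aux_cs hMsymm hps (x t - xbar t) (ω t)
    have h3 : V t ≤ ℓ ^ 2 := by
      rw [← hVm]
      exact pow_le_pow_left₀ (Real.sqrt_nonneg _) (htube t ht) 2
    have h4 : ω t ⬝ᵥ M.mulVec (ω t) ≤ ρmax ^ 2 := by
      have h5 := aux_psd hMle (ω t)
      rw [Matrix.sub_mulVec, Matrix.one_mulVec, dotProduct_sub] at h5
      have h6 := (Real.sqrt_le_left hρ).1 (hω t ht)
      linarith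
    have h7 : V t * (ω t ⬝ᵥ M.mulVec (ω t)) ≤ ℓ ^ 2 * ρmax ^ 2 :=
      mul_le_mul h3 h4 (aux_psd hps _) (by positivity)
    have h8 : (x t - xbar t) ⬝ᵥ M.mulVec (ω t) ≤ ℓ * ρmax := by
      apply le_of_sq_le_sq _ (by positivity)
      rw [mul_pow]
      exact h2.trans h7
    have h9 := mul_nonneg hβ.le (hV0 t)
    change _ ≤ -β * V t at h1
    simp only [hD]
    linarith
  intro t ht
  rw [hVm]
  have hh : ∀ s, 0 ≤ s → HasDerivAt (fun s => Real.exp (β * s) * (V s - 2 * ℓ * ρmax / β))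
      (Real.exp (β * s) * β * (V s - 2 * ℓ * ρmax / β) + Real.exp (β * s) * D s) s := by
    intro s hs
    have h1 : HasDerivAt (fun s => Real.exp (β * s)) (Real.exp (β * s) * β) s := by
      simpa using ((hasDerivAt_id s).const_mul β).exp
    exact h1.mul ((hderiv s hs).sub_const _)
  have hanti : AntitoneOn (fun s => Real.exp (β * s) * (V s - 2 * ℓ * ρmax / β)) (Set.Ici 0) := by
    apply antitoneOn_of_deriv_nonpos (convex_Ici 0)
    · exact fun s hs => (hh s hs).continuousAt.continuousWithinAt
    · intro s hs
      rw [interior_Ici] at hs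
      exact (hh s (le_of_lt hs)).differentiableAt.differentiableWithinAt
    · intro s hs
      rw [interior_Ici] at hs
      rw [(hh s (le_of_lt hs)).deriv]
      have h1 := hbound s (le_of_lt hs)
      have h2 : Real.exp (β * s) * β * (V s - 2 * ℓ * ρmax / β) + Real.exp (β * s) * D s
          = Real.exp (β * s) * (D s - (-β * V s + 2 * ℓ * ρmax)) := by
        field_simp
        ring
      rw [h2]
      exact mul_nonpos_of_nonneg_of_nonpos (Real.exp_pos _).le (by linarith)
  have hfin := hanti (Set.mem_Ici.2 le_rfl) (Set.mem_Ici.2 ht) ht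
  have hz : V 0 = 0 := by simp [hV, hinit]
  simp only [hz, mul_zero, Real.exp_zero, one_mul, zero_sub] at hfin
  have hE : Real.exp (-β * t) * Real.exp (β * t) = 1 := by
    rw [← Real.exp_add]; simp
  have := mul_le_mul_of_nonneg_left hfin (Real.exp_pos (-β * t)).le
  rw [← mul_assoc, hE] at this
  linarith
end
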